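/- For every λ with 0 < λ ≤ 1/2, ∫_{1−2λ}^1 k K(k) / (√(1−k²) √(k² − (1−2λ)²)) dk = K(√λ) K(√(1−λ)) = ∫_{(1−λ)/(1+λ)}^1 K(k) / (√(1−k²) √((1+λ)² k² − (1−λ)²)) dk. -/

import Mathlib

open Real MeasureTheory intervalIntegral Filter Topology

/-- Complete elliptic integral of the first kind. -/
noncomputable def ellipticK (k : ℝ) : ℝ :=
  ∫ θ in (0:ℝ)..(π/2), 1 / Real.sqrt (1 - k^2 * Real.sin θ ^ 2)

/-!
Write `K(k) = F(1 - k²)`, where `F(ρ) = ½ ∫₀^∞ dt / √(t (t + 1) (t + ρ))`, so that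
`K(√λ) K(√(1 - λ)) = F(λ) F(1 - λ)` is a double integral of an inverse square root of a polynomial.
Integrating in another order (Tonelli), after rational substitutions, makes the inner integral
again a value `F(ρ)`, and the outer variable can be changed to `ρ = 1 - k²`.

One choice of substitutions gives `F(r) F(1 - r)` as an integral of `F` with a quadratic weight,
which is the first formula. Another choice gives an integrand on `0 < t < w` invariant under
`(t, w) ↦ (1 / t, 1 / w)`; folding the domain to `0 < t < 1`, `0 < w` gives a cubic weight. This is
the second formula, taken at `r = ((1 - √λ) / (1 + √λ))²`, because Landen's transformation
identifies `F(r) F(1 - r)` with `F(λ) F(1 - λ)` up to a factor.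
-/

open Set Function
open scoped ENNReal Pointwise

/-! ### Changes of variables -/

lemma injOn_of_hasDerivAt_ne_zero {S : Set ℝ} (hS : S.OrdConnected) {f f' : ℝ → ℝ}
    (hf : ∀ x ∈ S, HasDerivAt f (f' x) x) (hf' : ∀ x ∈ S, f' x ≠ 0) : InjOn f S := by
  intro x hx y hy hxy
  wlog hlt : x < y generalizing x y
  · rcases lt_trichotomy x y with h | h | h
    exacts [this hx hy hxy h, h, (this hy hx hxy.symm h).symm]
  have hsub : Icc x y ⊆ S := hS.out hx hy
  obtain ⟨c, hc, hc0⟩ := exists_hasDerivAt_eq_zero hlt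
    (fun z hz ↦ (hf z (hsub hz)).continuousAt.continuousWithinAt) hxy
    (fun z hz ↦ hf z (hsub (Ioo_subset_Icc_self hz)))
  exact absurd hc0 (hf' c (hsub (Ioo_subset_Icc_self hc)))

lemma setLIntegral_eq_setLIntegral_abs_deriv_mul {S T : Set ℝ} (hS : S.OrdConnected)
    {f f' : ℝ → ℝ} (hf : ∀ x ∈ S, HasDerivAt f (f' x) x) (hf' : ∀ x ∈ S, f' x ≠ 0)
    (hmaps : MapsTo f S T) (hsurj : SurjOn f S T) (g : ℝ → ℝ≥0∞) :
    ∫⁻ y in T, g y = ∫⁻ x in S, ENNReal.ofReal |f' x| * g (f x) := by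
  rw [← hsurj.image_eq_of_mapsTo hmaps]
  exact lintegral_image_eq_lintegral_abs_deriv_mul hS.measurableSet
    (fun x hx ↦ (hf x hx).hasDerivWithinAt) (injOn_of_hasDerivAt_ne_zero hS hf hf') g

lemma setLIntegral_inv {S : Set ℝ} (hS : MeasurableSet S) (h0 : 0 ∉ S) (g : ℝ → ℝ≥0∞) :
    ∫⁻ y in S⁻¹, g y = ∫⁻ x in S, ENNReal.ofReal (x ^ 2)⁻¹ * g x⁻¹ := by
  rw [← image_inv_eq_inv, lintegral_image_eq_lintegral_abs_deriv_mul hS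
    (fun x hx ↦ (hasDerivAt_inv (ne_of_mem_of_not_mem hx h0)).hasDerivWithinAt) inv_injective.injOn]
  simp only [abs_neg, abs_inv, abs_pow, sq_abs]

lemma setLIntegral_Ioi_inv {a : ℝ} (ha : 0 < a) (g : ℝ → ℝ≥0∞) :
    ∫⁻ y in Ioi a⁻¹, g y = ∫⁻ x in Ioo 0 a, ENNReal.ofReal (x ^ 2)⁻¹ * g x⁻¹ := by
  rw [← inv_Ioo_0_left ha, setLIntegral_inv measurableSet_Ioo (by simp)]

/-! ### Iterated integrals -/

lemma measurableSet_snd_lt_fst : MeasurableSet {z : ℝ × ℝ | z.2 < z.1} :=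
  measurableSet_lt measurable_snd measurable_fst

lemma setLIntegral_Ioo_eq_lintegral_indicator (F : ℝ → ℝ → ℝ≥0∞) (a x : ℝ) :
    ∫⁻ y in Ioo a x, F x y
      = ∫⁻ y in Ioi a, {z : ℝ × ℝ | z.2 < z.1}.indicator (uncurry F) (x, y) := by
  rw [← Iio_inter_Ioi, ← setLIntegral_indicator measurableSet_Iio]
  rfl

lemma measurable_setLIntegral_Ioo {F : ℝ → ℝ → ℝ≥0∞} (hF : Measurable (uncurry F)) (a : ℝ) :
    Measurable fun x ↦ ∫⁻ y in Ioo a x, F x y := by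
  simp_rw [setLIntegral_Ioo_eq_lintegral_indicator F a]
  exact (hF.indicator measurableSet_snd_lt_fst).lintegral_prod_right'

lemma lintegral_lintegral_Ioo_swap {F : ℝ → ℝ → ℝ≥0∞} (hF : Measurable (uncurry F)) (a : ℝ) :
    ∫⁻ x in Ioi a, ∫⁻ y in Ioo a x, F x y = ∫⁻ y in Ioi a, ∫⁻ x in Ioi y, F x y := by
  simp_rw [setLIntegral_Ioo_eq_lintegral_indicator F a]
  rw [lintegral_lintegral_swap
    (f := fun x y ↦ {z : ℝ × ℝ | z.2 < z.1}.indicator (uncurry F) (x, y))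
    (hF.indicator measurableSet_snd_lt_fst).aemeasurable]
  refine setLIntegral_congr_fun measurableSet_Ioi fun y (hy : a < y) ↦ ?_
  rw [← inter_eq_left.2 (Ioi_subset_Ioi hy.le), ← setLIntegral_indicator measurableSet_Ioi]
  rfl

lemma setLIntegral_Ioi_eq_add {a b : ℝ} (hab : a ≤ b) (f : ℝ → ℝ≥0∞) :
    ∫⁻ x in Ioi a, f x = (∫⁻ x in Ioo a b, f x) + ∫⁻ x in Ioi b, f x := by
  have hdisj : Disjoint (Ioc a b) (Ioi b) := Ioc_disjoint_Ioi le_rfl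
  rw [← Ioc_union_Ioi_eq_Ioi hab, lintegral_union measurableSet_Ioi hdisj,
    setLIntegral_congr (Ioo_ae_eq_Ioc (μ := volume) (a := a) (b := b))]

/-- The inversion maps the part `1 < x < y` of the domain onto `0 < y < x < 1`, which completes the
part `x < 1`, `x < y` to a half-strip. -/
lemma lintegral_lintegral_Ioi_of_inv_invariant {F : ℝ → ℝ → ℝ≥0∞} (hF : Measurable (uncurry F))
    (hinv : ∀ x > 0, ∀ y > 0,
      ENNReal.ofReal (x ^ 2)⁻¹ * (ENNReal.ofReal (y ^ 2)⁻¹ * F x⁻¹ y⁻¹) = F x y) :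
    ∫⁻ x in Ioi 0, ∫⁻ y in Ioi x, F x y = ∫⁻ x in Ioo 0 1, ∫⁻ y in Ioi 0, F x y := by
  have hreflect :
      ∫⁻ x in Ioi 1, ∫⁻ y in Ioi x, F x y = ∫⁻ x in Ioo 0 1, ∫⁻ y in Ioo 0 x, F x y := by
    nth_rw 1 [← inv_one, setLIntegral_Ioi_inv one_pos]
    refine setLIntegral_congr_fun measurableSet_Ioo fun x hx ↦ ?_
    rw [setLIntegral_Ioi_inv hx.1, ← lintegral_const_mul' _ _ ENNReal.ofReal_ne_top]
    exact setLIntegral_congr_fun measurableSet_Ioo fun y hy ↦ hinv x hx.1 y hy.1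
  rw [setLIntegral_Ioi_eq_add zero_le_one, hreflect,
    ← lintegral_add_right _ (measurable_setLIntegral_Ioo hF 0)]
  refine setLIntegral_congr_fun measurableSet_Ioo fun x hx ↦ ?_
  rw [setLIntegral_Ioi_eq_add hx.1.le, add_comm]

/-! ### Carlson's integral -/

/-- The function `x ↦ x ^ (-1 / 2)` with values in `ℝ≥0∞`. By the conventions for `√` and `/`, it
vanishes for `x ≤ 0`. -/
noncomputable def invSqrt (x : ℝ) : ℝ≥0∞ := ENNReal.ofReal (1 / √x)

@[fun_prop]
lemma measurable_invSqrt : Measurable invSqrt := by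
  unfold invSqrt
  fun_prop

lemma invSqrt_ne_top (x : ℝ) : invSqrt x ≠ ∞ := ENNReal.ofReal_ne_top

lemma invSqrt_mul {x : ℝ} (hx : 0 ≤ x) (y : ℝ) : invSqrt (x * y) = invSqrt x * invSqrt y := by
  rw [invSqrt, invSqrt, invSqrt, ← ENNReal.ofReal_mul (by positivity), Real.sqrt_mul hx,
    one_div_mul_one_div]

lemma ofReal_abs_mul_invSqrt {d : ℝ} (hd : d ≠ 0) (x : ℝ) :
    ENNReal.ofReal |d| * invSqrt (d ^ 2 * x) = invSqrt x := by
  rw [invSqrt, invSqrt, ← ENNReal.ofReal_mul (abs_nonneg d), Real.sqrt_mul (sq_nonneg d),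
    Real.sqrt_sq_eq_abs, mul_one_div, div_mul_cancel_left₀ (abs_ne_zero.2 hd), one_div]

lemma invSqrt_mul_lintegral {x : ℝ} (hx : 0 ≤ x) (S : Set ℝ) (f : ℝ → ℝ) :
    invSqrt x * ∫⁻ t in S, invSqrt (f t) = ∫⁻ t in S, invSqrt (x * f t) := by
  simp_rw [invSqrt_mul hx, lintegral_const_mul' _ _ (invSqrt_ne_top x)]

lemma setLIntegral_invSqrt_mul_subst {S T : Set ℝ} (hS : S.OrdConnected) {f f' A B : ℝ → ℝ}
    (hf : ∀ x ∈ S, HasDerivAt f (f' x) x) (hf' : ∀ x ∈ S, f' x ≠ 0)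
    (hmaps : MapsTo f S T) (hsurj : SurjOn f S T) (hAB : ∀ x ∈ S, A (f x) = f' x ^ 2 * B x)
    (g : ℝ → ℝ≥0∞) :
    ∫⁻ y in T, invSqrt (A y) * g y = ∫⁻ x in S, invSqrt (B x) * g (f x) := by
  rw [setLIntegral_eq_setLIntegral_abs_deriv_mul hS hf hf' hmaps hsurj]
  refine setLIntegral_congr_fun hS.measurableSet fun x hx ↦ ?_
  rw [← mul_assoc, hAB x hx, ofReal_abs_mul_invSqrt (hf' x hx)]

lemma setLIntegral_invSqrt_subst {S T : Set ℝ} (hS : S.OrdConnected) {f f' A B : ℝ → ℝ}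
    (hf : ∀ x ∈ S, HasDerivAt f (f' x) x) (hf' : ∀ x ∈ S, f' x ≠ 0)
    (hmaps : MapsTo f S T) (hsurj : SurjOn f S T) (hAB : ∀ x ∈ S, A (f x) = f' x ^ 2 * B x) :
    ∫⁻ y in T, invSqrt (A y) = ∫⁻ x in S, invSqrt (B x) := by
  simpa only [mul_one] using
    setLIntegral_invSqrt_mul_subst hS hf hf' hmaps hsurj hAB fun _ ↦ 1

/-- Carlson's complete elliptic integral `R_F(0, a, b) = ½ ∫₀^∞ dt / √(t (t + a) (t + b))`, with
values in `ℝ≥0∞` so that substitutions and Tonelli's theorem need no integrability. It stands for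
`K(k) = R_F(0, 1, 1 - k²)`. -/
noncomputable def completeRF (a b : ℝ) : ℝ≥0∞ :=
  ∫⁻ t in Ioi 0, invSqrt (4 * (t * (t + a) * (t + b)))

lemma completeRF_comm (a b : ℝ) : completeRF a b = completeRF b a := by
  simp only [completeRF, mul_right_comm]

lemma completeRF_eq_lintegral_inv (a b : ℝ) :
    completeRF a b = ∫⁻ t in Ioi 0, invSqrt (4 * (t * (1 + a * t) * (1 + b * t))) := by
  refine setLIntegral_invSqrt_subst ordConnected_Ioi (f := fun t ↦ t⁻¹) (f' := fun t ↦ -(t ^ 2)⁻¹)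
    (fun t ht ↦ hasDerivAt_inv (ne_of_gt ht)) (fun t ht ↦ ?_) (fun t ht ↦ mem_Ioi.2 (inv_pos.2 ht))
    (fun t ht ↦ ⟨t⁻¹, mem_Ioi.2 (inv_pos.2 ht), inv_inv t⟩) (fun t ht ↦ ?_)
  all_goals have ht0 : t ≠ 0 := ne_of_gt ht
  · simp [ht0]
  · field_simp

lemma lintegral_invSqrt_mul_linear_mul_linear {α β γ : ℝ} (hα : 0 < α) (hβ : 0 < β) (hγ : 0 < γ)
    (δ : ℝ) : ∫⁻ t in Ioi 0, invSqrt (4 * (t * (α * t + β) * (γ * t + δ)))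
      = invSqrt (β * γ) * completeRF 1 (α * δ / (β * γ)) := by
  rw [completeRF, invSqrt_mul_lintegral (by positivity)]
  refine setLIntegral_invSqrt_subst ordConnected_Ioi (f := fun t ↦ β / α * t) (f' := fun _ ↦ β / α)
    (fun t _ ↦ hasDerivAt_const_mul _) (fun t _ ↦ by positivity)
    (fun t ht ↦ mul_pos (div_pos hβ hα) ht)
    (fun t ht ↦ ⟨α / β * t, mul_pos (div_pos hα hβ) ht, by field_simp⟩) (fun t _ ↦ ?_)
  field_simp

/-- Gauss' invariance of the complete elliptic integral under the arithmetic-geometric mean step,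
equivalent to Landen's transformation. -/
lemma completeRF_sq_sq {x y : ℝ} (hx : 0 < x) (hy : 0 < y) :
    completeRF (x ^ 2) (y ^ 2) = completeRF (x * y) (((x + y) / 2) ^ 2) := by
  set p := x * y with hp
  set q := ((x + y) / 2) ^ 2 with hq
  have hp0 : 0 < p := by positivity
  have hq0 : 0 < q := by positivity
  refine setLIntegral_invSqrt_subst ordConnected_Ioi (f := fun t ↦ t * (t + p) / (t + q))
    (f' := fun t ↦ (t + x * (x + y) / 2) * (t + y * (x + y) / 2) / (t + q) ^ 2)
    (fun t ht ↦ ?_) (fun t ht ↦ ?_) (fun t ht ↦ ?_) (fun t ht ↦ ?_) (fun t ht ↦ ?_)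
  all_goals have ht0 : 0 < t := ht
  · refine (((hasDerivAt_id t).mul ((hasDerivAt_id t).add_const p)).div
      ((hasDerivAt_id t).add_const q) (by positivity)).congr_deriv ?_
    simp only [id, Pi.mul_apply]
    rw [hp, hq]
    ring
  · positivity
  · simp only [mem_Ioi]
    positivity
  · set s := √((t - p) ^ 2 + 4 * q * t)
    have hs : s ^ 2 = (t - p) ^ 2 + 4 * q * t := Real.sq_sqrt (by positivity)
    have hroot : 0 < (t - p + s) / 2 := by
      have : |t - p| < s := Real.lt_sqrt_of_sq_lt <| by
        rw [sq_abs]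
        exact lt_add_of_pos_right _ (by positivity)
      linarith [neg_abs_le (t - p)]
    refine ⟨(t - p + s) / 2, hroot, ?_⟩
    simp only
    rw [div_eq_iff (by positivity)]
    linear_combination hs / 4
  · have h1 : t * (t + p) / (t + q) + x ^ 2 = (t + x * (x + y) / 2) ^ 2 / (t + q) := by
      field_simp
      rw [hp, hq]
      ring
    have h2 : t * (t + p) / (t + q) + y ^ 2 = (t + y * (x + y) / 2) ^ 2 / (t + q) := by
      field_simp
      rw [hp, hq]
      ring
    rw [h1, h2]
    field_simp

lemma completeRF_eq_invSqrt_mul {a b : ℝ} (ha : 0 < a) :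
    completeRF a b = invSqrt a * completeRF 1 (b / a) := by
  simpa [completeRF] using lintegral_invSqrt_mul_linear_mul_linear one_pos ha one_pos b

/-- Landen's transformation `K(k') = 2 / (1 + k) * K((1 - k) / (1 + k))`, with `k = l`. -/
lemma completeRF_one_sq {l : ℝ} (hl : 0 < l) :
    completeRF 1 (l ^ 2) = ENNReal.ofReal (2 / (1 + l)) * completeRF 1 (4 * l / (1 + l) ^ 2) := by
  have hagm := completeRF_sq_sq one_pos hl
  rw [one_pow, one_mul, completeRF_comm l,
    completeRF_eq_invSqrt_mul (a := ((1 + l) / 2) ^ 2) (by positivity), invSqrt,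
    Real.sqrt_sq (by positivity), one_div_div] at hagm
  rw [hagm, div_pow, div_div_eq_mul_div, mul_comm l]
  norm_num

lemma completeRF_one_one_sub_sq {l : ℝ} (hl0 : -1 < l) (hl1 : l < 1) :
    completeRF 1 (1 - l ^ 2)
      = ENNReal.ofReal (1 / (1 + l)) * completeRF 1 (((1 - l) / (1 + l)) ^ 2) := by
  have hl := neg_lt_iff_pos_add'.1 hl0
  rw [completeRF_one_sq (div_pos (sub_pos.2 hl1) hl), ← mul_assoc,
    ← ENNReal.ofReal_mul (by positivity)]
  have hadd : 1 + (1 - l) / (1 + l) = 2 / (1 + l) := by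
    field_simp
    ring
  rw [hadd, show 1 / (1 + l) * (2 / (2 / (1 + l))) = 1 by field_simp, ENNReal.ofReal_one, one_mul]
  congr 1
  field_simp
  ring

lemma lintegral_invSqrt_trig {a b : ℝ} (hb : 0 < b) :
    ∫⁻ θ in Ioo 0 (π / 2), invSqrt (a * cos θ ^ 2 + b * sin θ ^ 2) = completeRF a b := by
  symm
  have hcos : ∀ θ ∈ Ioo 0 (π / 2), 0 < cos θ := fun θ hθ ↦
    cos_pos_of_mem_Ioo ⟨by linarith [hθ.1, pi_pos], hθ.2⟩
  have hsin : ∀ θ ∈ Ioo 0 (π / 2), 0 < sin θ := fun θ hθ ↦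
    sin_pos_of_pos_of_lt_pi hθ.1 (by linarith [hθ.2, pi_pos])
  refine setLIntegral_invSqrt_subst ordConnected_Ioo (f := fun θ ↦ b * tan θ ^ 2)
    (f' := fun θ ↦ 2 * b * sin θ / cos θ ^ 3) (fun θ hθ ↦ ?_) (fun θ hθ ↦ ?_) (fun θ hθ ↦ ?_)
    (fun t ht ↦ ?_) (fun θ hθ ↦ ?_)
  · have hc := hcos θ hθ
    refine (((hasDerivAt_tan hc.ne').pow 2).const_mul b).congr_deriv ?_
    rw [tan_eq_sin_div_cos]
    push_cast
    field_simp
  · have hc := hcos θ hθ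
    have hs := hsin θ hθ
    positivity
  · have ht := tan_pos_of_pos_of_lt_pi_div_two hθ.1 hθ.2
    simp only [mem_Ioi]
    positivity
  · have ht0 : 0 < t := ht
    refine ⟨arctan √(t / b), ⟨arctan_pos.2 (by positivity), arctan_lt_pi_div_two _⟩, ?_⟩
    simp only
    rw [tan_arctan, Real.sq_sqrt (by positivity)]
    field_simp
  · have hc := hcos θ hθ
    rw [tan_eq_sin_div_cos]
    have h1 : b * (sin θ / cos θ) ^ 2 + b = b / cos θ ^ 2 := by
      field_simp
      rw [sin_sq_add_cos_sq]
    rw [h1]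
    field_simp
    ring

/-! ### The first product formula -/

lemma invSqrt_mul_completeRF_one_sub_eq_lintegral_Ioo {r z : ℝ} (hr : 0 < r) (hz : 0 < z) :
    invSqrt (4 * (z * (z + 1) * (z + r))) * completeRF 1 (1 - r)
      = ∫⁻ a in Ioo 0 z,
          invSqrt (16 * (a * (a + 1) * (z - a) * (z + r) * ((1 - r) * z + z * a + r * a))) := by
  rw [completeRF, invSqrt_mul_lintegral (by positivity)]
  refine setLIntegral_invSqrt_subst ordConnected_Ioo (f := fun a ↦ a * (z + 1) / (z - a))
    (f' := fun a ↦ z * (z + 1) / (z - a) ^ 2) (fun a ha ↦ ?_) (fun a ha ↦ ?_) (fun a ha ↦ ?_)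
    (fun t ht ↦ ?_) (fun a ha ↦ ?_)
  · have hza : z - a ≠ 0 := (sub_pos.2 ha.2).ne'
    refine (((hasDerivAt_id a).mul_const (z + 1)).div ((hasDerivAt_id a).const_sub z)
      hza).congr_deriv ?_
    simp only [id]
    ring
  · have hza := sub_pos.2 ha.2
    positivity
  · exact div_pos (mul_pos ha.1 (by positivity)) (sub_pos.2 ha.2)
  · have ht0 : 0 < t := ht
    refine ⟨t * z / (t + z + 1), ⟨by positivity, ?_⟩, ?_⟩
    · rw [div_lt_iff₀ (by positivity)]
      nlinarith
    · simp only
      have : z - t * z / (t + z + 1) = z * (z + 1) / (t + z + 1) := by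
        field_simp
        ring
      rw [this]
      field_simp
  · have hza : z - a ≠ 0 := (sub_pos.2 ha.2).ne'
    field_simp
    ring

lemma lintegral_Ioi_invSqrt_eq_lintegral_Ioi_zero {r a : ℝ} (hr : 0 < r) (ha : 0 < a) :
    ∫⁻ z in Ioi a,
        invSqrt (16 * (a * (a + 1) * (z - a) * (z + r) * ((1 - r) * z + z * a + r * a)))
      = ∫⁻ w in Ioi 0, invSqrt
          (16 * (w * (w + 1) * (a * (a + 1) * ((w + 1) * (a * (a + 1)) + r * (1 - r) * w)))) := by
  have har : 0 < a + r := by positivity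
  refine setLIntegral_invSqrt_subst ordConnected_Ioi (f := fun w ↦ a + (a + r) * w)
    (f' := fun _ ↦ a + r) (fun w _ ↦ (hasDerivAt_const_mul _).const_add a) (fun w _ ↦ har.ne')
    (fun w hw ↦ lt_add_of_pos_right a (mul_pos har hw))
    (fun z hz ↦ ⟨(z - a) / (a + r), div_pos (sub_pos.2 hz) har, by field_simp; ring⟩)
    (fun w _ ↦ by ring)

lemma lintegral_invSqrt_mul_add_one {c d : ℝ} (hc : 0 < c) :
    ∫⁻ a in Ioi 0, invSqrt (4 * (a * (a + 1) * (c * (a * (a + 1)) + d)))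
      = invSqrt c * completeRF 1 (4 * d / c) := by
  have h := lintegral_invSqrt_mul_linear_mul_linear one_pos one_pos hc (4 * d)
  simp only [one_mul] at h
  rw [← h]
  symm
  refine setLIntegral_invSqrt_subst ordConnected_Ioi (f := fun a ↦ 4 * (a * (a + 1)))
    (f' := fun a ↦ 4 * (2 * a + 1)) (fun a _ ↦ ?_) (fun a ha ↦ ?_) (fun a ha ↦ ?_) (fun t ht ↦ ?_)
    (fun a _ ↦ by ring)
  · refine (((hasDerivAt_id a).mul ((hasDerivAt_id a).add_const 1)).const_mul 4).congr_deriv ?_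
    simp only [id]
    ring
  · have ha0 : 0 < a := ha
    positivity
  · have ha0 : 0 < a := ha
    simp only [mem_Ioi]
    positivity
  · have ht0 : 0 < t := ht
    have hs : √(1 + t) ^ 2 = 1 + t := Real.sq_sqrt (by positivity)
    have : 1 < √(1 + t) := Real.lt_sqrt_of_sq_lt (by linarith)
    refine ⟨(√(1 + t) - 1) / 2, mem_Ioi.2 (by linarith), ?_⟩
    linear_combination hs

/-- In trigonometric form, `K(k) K(k') = ∫₀^{π/2} K(√(1 - 4 k² k'² sin² θ)) dθ`, with `r = k²` and
`w = tan² θ`; this is a case of the addition theorem for Legendre functions of degree `-1 / 2`. -/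
lemma completeRF_mul_completeRF_one_sub_eq_lintegral_Ioi {r : ℝ} (hr0 : 0 < r) :
    completeRF 1 r * completeRF 1 (1 - r)
      = ∫⁻ w in Ioi 0,
          invSqrt (4 * (w * (w + 1) ^ 2)) * completeRF 1 (4 * (r * (1 - r)) * w / (w + 1)) := by
  calc completeRF 1 r * completeRF 1 (1 - r)
      = ∫⁻ z in Ioi 0, ∫⁻ a in Ioo 0 z,
          invSqrt (16 * (a * (a + 1) * (z - a) * (z + r) * ((1 - r) * z + z * a + r * a))) := by
        rw [completeRF, ← lintegral_mul_const _ (by fun_prop)]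
        exact setLIntegral_congr_fun measurableSet_Ioi fun z hz ↦
          invSqrt_mul_completeRF_one_sub_eq_lintegral_Ioo hr0 hz
    _ = ∫⁻ a in Ioi 0, ∫⁻ w in Ioi 0, invSqrt
          (16 * (w * (w + 1) * (a * (a + 1) * ((w + 1) * (a * (a + 1)) + r * (1 - r) * w)))) := by
        rw [lintegral_lintegral_Ioo_swap (by fun_prop) 0]
        exact setLIntegral_congr_fun measurableSet_Ioi fun a ha ↦
          lintegral_Ioi_invSqrt_eq_lintegral_Ioi_zero hr0 ha
    _ = ∫⁻ w in Ioi 0, ∫⁻ a in Ioi 0, invSqrt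
          (16 * (w * (w + 1) * (a * (a + 1) * ((w + 1) * (a * (a + 1)) + r * (1 - r) * w)))) :=
        lintegral_lintegral_swap (by fun_prop)
    _ = _ := by
        refine setLIntegral_congr_fun measurableSet_Ioi fun w (hw : 0 < w) ↦ ?_
        have hw1 : 0 < w + 1 := by positivity
        rw [show 4 * (w * (w + 1) ^ 2) = 4 * (w * (w + 1)) * (w + 1) by ring,
          invSqrt_mul (by positivity), mul_assoc (invSqrt _),
          mul_assoc 4 _ w, ← lintegral_invSqrt_mul_add_one hw1,
          invSqrt_mul_lintegral (by positivity)]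
        congr! 3
        ring

/-- The integration variable is `ρ = 1 - k²`. -/
lemma completeRF_mul_completeRF_one_sub_eq_lintegral_quadratic {r : ℝ} (hr0 : 0 < r) (hr1 : r < 1) :
    completeRF 1 r * completeRF 1 (1 - r)
      = ∫⁻ ρ in Ioo 0 (4 * (r * (1 - r))),
          invSqrt (4 * (ρ * (4 * (r * (1 - r)) - ρ))) * completeRF 1 ρ := by
  have hs : 0 < 4 * (r * (1 - r)) := by
    have := sub_pos.2 hr1
    positivity
  rw [completeRF_mul_completeRF_one_sub_eq_lintegral_Ioi hr0]
  set s := 4 * (r * (1 - r))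
  symm
  refine setLIntegral_invSqrt_mul_subst ordConnected_Ioi (f := fun w ↦ s * w / (w + 1))
    (f' := fun w ↦ s / (w + 1) ^ 2) (fun w hw ↦ ?_) (fun w hw ↦ ?_) (fun w hw ↦ ?_)
    (fun ρ hρ ↦ ?_) (fun w hw ↦ ?_) (completeRF 1)
  · have hw0 : 0 < w := hw
    refine (((hasDerivAt_id w).const_mul s).div ((hasDerivAt_id w).add_const 1)
      (by positivity)).congr_deriv ?_
    simp only [id]
    ring
  · have hw0 : 0 < w := hw
    positivity
  · have hw0 : 0 < w := hw
    refine ⟨by positivity, ?_⟩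
    rw [div_lt_iff₀ (by positivity)]
    linarith
  · have hsρ : 0 < s - ρ := sub_pos.2 hρ.2
    refine ⟨ρ / (s - ρ), div_pos hρ.1 hsρ, ?_⟩
    have : ρ / (s - ρ) + 1 = s / (s - ρ) := by
      field_simp
      ring
    simp only [this]
    field_simp
  · have hw0 : 0 < w := hw
    field_simp
    ring

/-! ### The second product formula -/

lemma invSqrt_mul_completeRF_one_eq_lintegral_Ioi {r y : ℝ} (hr : r < 1) (hy : 0 < y) :
    invSqrt (4 * (y * (1 + y) * (1 + (1 - r) * y))) * completeRF 1 r
      = ∫⁻ t in Ioi 0,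
          invSqrt (16 * (t * (t + (1 + t) * y) * (t + (t + r) * y) * (1 + (1 - r) * y))) := by
  have hr' := sub_pos.2 hr
  rw [completeRF, invSqrt_mul_lintegral (by positivity)]
  refine setLIntegral_invSqrt_subst ordConnected_Ioi (f := fun t ↦ t * ((1 + y) / y))
    (f' := fun _ ↦ (1 + y) / y) (fun t _ ↦ hasDerivAt_mul_const _) (fun t _ ↦ by positivity)
    (fun t ht ↦ mul_pos ht (div_pos (by positivity) hy))
    (fun u hu ↦ ⟨u * (y / (1 + y)), mul_pos hu (div_pos hy (by positivity)), by field_simp⟩)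
    (fun t _ ↦ ?_)
  field_simp
  ring

lemma lintegral_Ioi_zero_invSqrt_eq_lintegral_Ioi {r t : ℝ} (ht : 0 < t) :
    ∫⁻ y in Ioi 0, invSqrt (16 * (t * (t + (1 + t) * y) * (t + (t + r) * y) * (1 + (1 - r) * y)))
      = ∫⁻ w in Ioi t,
          invSqrt (16 * (t * w * ((1 - r) * w + (1 + r * t)) * ((t + r) * w + (1 - r) * t))) := by
  have ht1 : 0 < 1 + t := by positivity
  symm
  refine setLIntegral_invSqrt_subst ordConnected_Ioi (f := fun y ↦ t + (1 + t) * y)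
    (f' := fun _ ↦ 1 + t) (fun y _ ↦ (hasDerivAt_const_mul _).const_add t) (fun y _ ↦ ht1.ne')
    (fun y hy ↦ lt_add_of_pos_right t (mul_pos ht1 hy))
    (fun w hw ↦ ⟨(w - t) / (1 + t), div_pos (sub_pos.2 hw) ht1, by field_simp; ring⟩)
    (fun y _ ↦ by ring)

/-- The parametrization of the interval `(0, ((1 - r) / (1 + r))²)` by `t ∈ (0, 1)` that turns the
parameter of the inner integral in the second product formula into the integration variable. -/
noncomputable def cubicParam (r t : ℝ) : ℝ := (1 - r) ^ 2 * t / ((t + r) * (1 + r * t))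

lemma cubicParam_pos {r t : ℝ} (hr0 : 0 < r) (hr1 : r < 1) (ht : 0 < t) : 0 < cubicParam r t := by
  have := sub_pos.2 hr1
  unfold cubicParam
  positivity

lemma one_sub_cubicParam {r t : ℝ} (hr : 0 < r) (ht : 0 ≤ t) :
    1 - cubicParam r t = r * (1 + t) ^ 2 / ((t + r) * (1 + r * t)) := by
  unfold cubicParam
  field_simp
  ring

lemma sq_sub_cubicParam {r t : ℝ} (hr : 0 < r) (ht : 0 ≤ t) :
    ((1 - r) / (1 + r)) ^ 2 - cubicParam r t
      = (1 - r) ^ 2 * r * (1 - t) ^ 2 / ((1 + r) ^ 2 * ((t + r) * (1 + r * t))) := by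
  unfold cubicParam
  field_simp
  ring

lemma hasDerivAt_cubicParam {r t : ℝ} (hr : 0 < r) (ht : 0 ≤ t) :
    HasDerivAt (cubicParam r) ((1 - r) ^ 2 * r * (1 - t ^ 2) / ((t + r) * (1 + r * t)) ^ 2) t := by
  refine (((hasDerivAt_id t).const_mul ((1 - r) ^ 2)).div (((hasDerivAt_id t).add_const r).mul
    (((hasDerivAt_id t).const_mul r).const_add 1)) ?_).congr_deriv ?_
  all_goals simp only [id, Pi.mul_apply]
  · positivity
  · ring

lemma surjOn_cubicParam {r : ℝ} (hr : 0 < r) :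
    SurjOn (cubicParam r) (Ioo 0 1) (Ioo 0 (((1 - r) / (1 + r)) ^ 2)) := by
  have hivt := intermediate_value_Ioo zero_le_one
    fun t ht ↦ (hasDerivAt_cubicParam hr ht.1).continuousAt.continuousWithinAt
  have h0 : cubicParam r 0 = 0 := by simp [cubicParam]
  have h1 : cubicParam r 1 = ((1 - r) / (1 + r)) ^ 2 := by
    unfold cubicParam
    field_simp
  rwa [h0, h1] at hivt

lemma lintegral_Ioi_invSqrt_eq_mul_completeRF_cubicParam {r t : ℝ} (hr0 : 0 < r) (hr1 : r < 1)
    (ht : 0 < t) :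
    ∫⁻ w in Ioi 0,
        invSqrt (16 * (t * w * ((1 - r) * w + (1 + r * t)) * ((t + r) * w + (1 - r) * t)))
      = invSqrt (4 * (t * (t + r) * (1 + r * t))) * completeRF 1 (cubicParam r t) := by
  have hinner := lintegral_invSqrt_mul_linear_mul_linear (sub_pos.2 hr1) (β := 1 + r * t)
    (by positivity) (γ := t + r) (by positivity) ((1 - r) * t)
  rw [show 4 * (t * (t + r) * (1 + r * t)) = 4 * t * ((1 + r * t) * (t + r)) by ring,
    show cubicParam r t = (1 - r) * ((1 - r) * t) / ((1 + r * t) * (t + r)) by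
      unfold cubicParam
      ring,
    invSqrt_mul (by positivity), mul_assoc (invSqrt _), ← hinner,
    invSqrt_mul_lintegral (by positivity)]
  congr! 3
  ring

lemma completeRF_mul_completeRF_one_sub_eq_lintegral_Ioo_zero_one {r : ℝ} (hr0 : 0 < r)
    (hr1 : r < 1) :
    completeRF 1 r * completeRF 1 (1 - r)
      = ∫⁻ t in Ioo 0 1, invSqrt (4 * (t * (t + r) * (1 + r * t)))
          * completeRF 1 (cubicParam r t) := by
  calc completeRF 1 r * completeRF 1 (1 - r)
      = ∫⁻ y in Ioi 0, ∫⁻ t in Ioi 0,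
          invSqrt (16 * (t * (t + (1 + t) * y) * (t + (t + r) * y) * (1 + (1 - r) * y))) := by
        rw [mul_comm, completeRF_eq_lintegral_inv, ← lintegral_mul_const _ (by fun_prop)]
        simp only [one_mul]
        exact setLIntegral_congr_fun measurableSet_Ioi fun y hy ↦
          invSqrt_mul_completeRF_one_eq_lintegral_Ioi hr1 hy
    _ = ∫⁻ t in Ioi 0, ∫⁻ w in Ioi t,
          invSqrt (16 * (t * w * ((1 - r) * w + (1 + r * t)) * ((t + r) * w + (1 - r) * t))) := by
        rw [lintegral_lintegral_swap (by fun_prop)]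
        exact setLIntegral_congr_fun measurableSet_Ioi fun t ht ↦
          lintegral_Ioi_zero_invSqrt_eq_lintegral_Ioi ht
    _ = ∫⁻ t in Ioo 0 1, ∫⁻ w in Ioi 0,
          invSqrt (16 * (t * w * ((1 - r) * w + (1 + r * t)) * ((t + r) * w + (1 - r) * t))) := by
        refine lintegral_lintegral_Ioi_of_inv_invariant (by fun_prop) fun t ht w hw ↦ ?_
        rw [← ofReal_abs_mul_invSqrt (d := (t ^ 2)⁻¹) (by positivity) (16 * (t * w * _ * _)),
          ← ofReal_abs_mul_invSqrt (d := (w ^ 2)⁻¹) (by positivity) (_ * (16 * (t * w * _ * _))),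
          abs_of_pos (by positivity), abs_of_pos (by positivity)]
        congr! 3
        field_simp
        ring
    _ = _ := setLIntegral_congr_fun measurableSet_Ioo fun t ht ↦
        lintegral_Ioi_invSqrt_eq_mul_completeRF_cubicParam hr0 hr1 ht.1

lemma completeRF_mul_completeRF_one_sub_eq_lintegral_cubic {r : ℝ} (hr0 : 0 < r) (hr1 : r < 1) :
    completeRF 1 r * completeRF 1 (1 - r)
      = ∫⁻ ρ in Ioo 0 (((1 - r) / (1 + r)) ^ 2),
          invSqrt ((1 + r) ^ 2 * (4 * (ρ * (1 - ρ) * (((1 - r) / (1 + r)) ^ 2 - ρ))))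
            * completeRF 1 ρ := by
  have hr' := sub_pos.2 hr1
  rw [completeRF_mul_completeRF_one_sub_eq_lintegral_Ioo_zero_one hr0 hr1]
  symm
  refine setLIntegral_invSqrt_mul_subst ordConnected_Ioo
    (fun t ht ↦ hasDerivAt_cubicParam hr0 ht.1.le) (fun t ht ↦ ?_) (fun t ht ↦ ?_)
    (surjOn_cubicParam hr0) (fun t ht ↦ ?_) (completeRF 1)
  · have ht0 := ht.1
    have ht1 : 0 < 1 - t ^ 2 := by nlinarith [ht.2]
    positivity
  · have ht0 := ht.1
    have ht1 := sub_pos.2 ht.2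
    refine ⟨cubicParam_pos hr0 hr1 ht0, sub_pos.1 ?_⟩
    rw [sq_sub_cubicParam hr0 ht0.le]
    positivity
  · have ht0 := ht.1
    rw [sq_sub_cubicParam hr0 ht0.le, one_sub_cubicParam hr0 ht0.le]
    unfold cubicParam
    field_simp
    ring

lemma completeRF_mul_completeRF_one_sub_eq_lintegral_cubic_landen {lam : ℝ} (h0 : 0 < lam)
    (h1 : lam < 1) :
    completeRF 1 lam * completeRF 1 (1 - lam)
      = ∫⁻ ρ in Ioo 0 (1 - ((1 - lam) / (1 + lam)) ^ 2),
          invSqrt ((1 + lam) ^ 2 * (4 * (ρ * (1 - ρ) * (1 - ((1 - lam) / (1 + lam)) ^ 2 - ρ))))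
            * completeRF 1 ρ := by
  obtain ⟨l, hl0, rfl⟩ : ∃ l > 0, lam = l ^ 2 :=
    ⟨√lam, Real.sqrt_pos.2 h0, (Real.sq_sqrt h0.le).symm⟩
  have hl1 : l < 1 := by nlinarith
  have hl' := sub_pos.2 hl1
  set r := ((1 - l) / (1 + l)) ^ 2 with hr
  have h1r : 4 * l / (1 + l) ^ 2 = 1 - r := by
    rw [hr]
    field_simp
    ring
  have hr1 : r < 1 := sub_pos.1 (h1r ▸ by positivity)
  have hbound : ((1 - r) / (1 + r)) ^ 2 = 1 - ((1 - l ^ 2) / (1 + l ^ 2)) ^ 2 := by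
    rw [hr]
    field_simp
    ring
  have hscale : 1 + r = 2 / (1 + l) ^ 2 * (1 + l ^ 2) := by
    rw [hr]
    field_simp
    ring
  have hprefactor : 2 / (1 + l) * (1 / (1 + l)) = |2 / (1 + l) ^ 2| := by
    rw [abs_of_pos (by positivity)]
    field_simp
  rw [completeRF_one_sq hl0, completeRF_one_one_sub_sq (by linarith) hl1, ← hr, h1r,
    mul_mul_mul_comm, ← ENNReal.ofReal_mul (by positivity), mul_comm (completeRF 1 (1 - r)),
    completeRF_mul_completeRF_one_sub_eq_lintegral_cubic (by positivity) hr1, hbound, hprefactor,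
    hscale, ← lintegral_const_mul' _ _ ENNReal.ofReal_ne_top]
  refine setLIntegral_congr_fun measurableSet_Ioo fun ρ _ ↦ ?_
  rw [mul_pow, mul_assoc (_ ^ 2), ← mul_assoc, ofReal_abs_mul_invSqrt (by positivity)]

/-! ### Integrals of `K` -/

lemma setLIntegral_invSqrt_mul_one_sub_sq {c : ℝ} (hc : 0 ≤ c) {A B : ℝ → ℝ}
    (hAB : ∀ k ∈ Ioo c 1, A (1 - k ^ 2) = (2 * k) ^ 2 * B k) (g : ℝ → ℝ≥0∞) :
    ∫⁻ ρ in Ioo 0 (1 - c ^ 2), invSqrt (A ρ) * g ρ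
      = ∫⁻ k in Ioo c 1, invSqrt (B k) * g (1 - k ^ 2) := by
  refine setLIntegral_invSqrt_mul_subst ordConnected_Ioo (f := fun k ↦ 1 - k ^ 2)
    (f' := fun k ↦ -(2 * k)) (fun k _ ↦ ?_) (fun k hk ↦ ?_) (fun k hk ↦ ?_) (fun ρ hρ ↦ ?_)
    (fun k hk ↦ by rw [hAB k hk, neg_sq]) g
  · simpa using (hasDerivAt_pow 2 k).const_sub 1
  · have := hc.trans_lt hk.1
    simpa using this.ne'
  · have hk0 := hc.trans_lt hk.1
    exact ⟨by nlinarith [hk.2], by nlinarith [hk.1]⟩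
  · have hsq : √(1 - ρ) ^ 2 = 1 - ρ := Real.sq_sqrt (by nlinarith [hρ.2])
    refine ⟨√(1 - ρ), ⟨Real.lt_sqrt_of_sq_lt (by linarith [hρ.2]), ?_⟩, by simp [hsq]⟩
    rw [Real.sqrt_lt' one_pos]
    linarith [hρ.1]

lemma ellipticK_nonneg (k : ℝ) : 0 ≤ ellipticK k :=
  integral_nonneg (by positivity) fun _ _ ↦ by positivity

lemma measurable_ellipticK : Measurable ellipticK := by
  unfold ellipticK
  simp_rw [integral_of_le (div_nonneg pi_nonneg zero_le_two)]
  exact (StronglyMeasurable.integral_prod_right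
    (f := fun k θ ↦ 1 / √(1 - k ^ 2 * sin θ ^ 2)) (by fun_prop)).measurable

lemma ofReal_ellipticK {k : ℝ} (hk : k ^ 2 < 1) :
    ENNReal.ofReal (ellipticK k) = completeRF 1 (1 - k ^ 2) := by
  have hpos (θ : ℝ) : 0 < 1 - k ^ 2 * sin θ ^ 2 := by
    nlinarith [sin_sq_le_one θ, sq_nonneg k, sq_nonneg (sin θ)]
  have hcont : Continuous fun θ ↦ 1 / √(1 - k ^ 2 * sin θ ^ 2) :=
    continuous_const.div (by fun_prop) fun θ ↦ (Real.sqrt_pos.2 (hpos θ)).ne'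
  rw [ellipticK, integral_of_le (by positivity), integral_Ioc_eq_integral_Ioo,
    ofReal_integral_eq_lintegral_ofReal (hcont.integrableOn_Icc.mono_set Ioo_subset_Icc_self)
      (ae_of_all _ fun θ ↦ by positivity),
    ← lintegral_invSqrt_trig (sub_pos.2 hk)]
  refine lintegral_congr fun θ ↦ ?_
  rw [invSqrt, cos_sq']
  ring_nf

lemma integral_ellipticK_div_sqrt {c : ℝ} (hc0 : 0 ≤ c) (hc1 : c ≤ 1) {A B : ℝ → ℝ}
    (hB : Measurable B) (hAB : ∀ k ∈ Ioo c 1, A (1 - k ^ 2) = (2 * k) ^ 2 * B k) :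
    ∫ k in c..1, ellipticK k / √(B k)
      = (∫⁻ ρ in Ioo 0 (1 - c ^ 2), invSqrt (A ρ) * completeRF 1 ρ).toReal := by
  rw [setLIntegral_invSqrt_mul_one_sub_sq hc0 hAB, integral_of_le hc1, integral_Ioc_eq_integral_Ioo,
    integral_eq_lintegral_of_nonneg_ae
      (ae_of_all _ fun k ↦ div_nonneg (ellipticK_nonneg k) (Real.sqrt_nonneg _))
      (measurable_ellipticK.div (by fun_prop)).aestronglyMeasurable]
  congr 1
  refine setLIntegral_congr_fun measurableSet_Ioo fun k hk ↦ ?_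
  have hk2 : k ^ 2 < 1 := by nlinarith [hk.1, hk.2]
  rw [← ofReal_ellipticK hk2, invSqrt, ← ENNReal.ofReal_mul (by positivity), one_div_mul_eq_div]

lemma ellipticK_sqrt_mul_ellipticK_sqrt_one_sub {lam : ℝ} (h0 : 0 < lam) (h1 : lam < 1) :
    ellipticK √lam * ellipticK √(1 - lam) = (completeRF 1 lam * completeRF 1 (1 - lam)).toReal := by
  have hK (m : ℝ) (hm0 : 0 < m) (hm1 : m < 1) :
      ellipticK √m = (completeRF 1 (1 - m)).toReal := by
    have hsq := Real.sq_sqrt hm0.le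
    rw [← hsq, ← ofReal_ellipticK (hsq.trans_lt hm1), ENNReal.toReal_ofReal (ellipticK_nonneg _),
      hsq]
  rw [hK lam h0 h1, hK (1 - lam) (sub_pos.2 h1) (by linarith), sub_sub_cancel, mul_comm,
    ENNReal.toReal_mul]

lemma integral_mul_ellipticK_div_sqrt_mul_sqrt {lam : ℝ} (h0 : 0 < lam) (h1 : lam < 1) :
    ∫ k in |1 - 2 * lam|..1, k * ellipticK k / (√(1 - k ^ 2) * √(k ^ 2 - (1 - 2 * lam) ^ 2))
      = ellipticK √lam * ellipticK √(1 - lam) := by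
  set c := |1 - 2 * lam|
  have hc0 : 0 ≤ c := abs_nonneg _
  have hc1 : c ≤ 1 := abs_le.2 ⟨by linarith, by linarith⟩
  have hc : (1 - 2 * lam) ^ 2 = c ^ 2 := (sq_abs _).symm
  have hrange : 4 * (lam * (1 - lam)) = 1 - c ^ 2 := by
    rw [← hc]
    ring
  rw [ellipticK_sqrt_mul_ellipticK_sqrt_one_sub h0 h1,
    completeRF_mul_completeRF_one_sub_eq_lintegral_quadratic h0 h1, hrange, hc,
    ← integral_ellipticK_div_sqrt (B := fun k ↦ (1 - k ^ 2) * (k ^ 2 - c ^ 2) / k ^ 2) hc0 hc1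
      (by fun_prop) fun k hk ↦ ?_]
  · refine integral_congr fun k hk ↦ ?_
    rw [uIcc_of_le hc1] at hk
    have hk0 : 0 ≤ k := hc0.trans hk.1
    have hk2 : 0 ≤ 1 - k ^ 2 := by nlinarith [hk.2]
    rw [Real.sqrt_div' _ (sq_nonneg k), Real.sqrt_sq hk0, Real.sqrt_mul hk2, div_div_eq_mul_div,
      mul_comm k]
  · have hk0 : 0 < k := hc0.trans_lt hk.1
    field_simp
    ring

lemma integral_ellipticK_div_sqrt_mul_sqrt {lam : ℝ} (h0 : 0 < lam) (h1 : lam < 1) :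
    ∫ k in ((1 - lam) / (1 + lam))..1,
        ellipticK k / (√(1 - k ^ 2) * √((1 + lam) ^ 2 * k ^ 2 - (1 - lam) ^ 2))
      = ellipticK √lam * ellipticK √(1 - lam) := by
  have hc0 : 0 ≤ (1 - lam) / (1 + lam) := div_nonneg (by linarith) (by linarith)
  have hc1 : (1 - lam) / (1 + lam) ≤ 1 := div_le_one_of_le₀ (by linarith) (by linarith)
  rw [ellipticK_sqrt_mul_ellipticK_sqrt_one_sub h0 h1,
    completeRF_mul_completeRF_one_sub_eq_lintegral_cubic_landen h0 h1,
    ← integral_ellipticK_div_sqrt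
      (B := fun k ↦ (1 - k ^ 2) * ((1 + lam) ^ 2 * k ^ 2 - (1 - lam) ^ 2)) hc0 hc1
      (by fun_prop) fun k _ ↦ ?_]
  · refine integral_congr fun k hk ↦ ?_
    rw [uIcc_of_le hc1] at hk
    have hk2 : 0 ≤ 1 - k ^ 2 := by nlinarith [hk.1, hk.2]
    rw [Real.sqrt_mul hk2]
  · field_simp
    ring

theorem stmt_14_general (lam : ℝ) (h0 : 0 < lam) (h1 : lam < 1) :
    (∫ k in |1 - 2 * lam|..1,
        k * ellipticK k / (√(1 - k ^ 2) * √(k ^ 2 - (1 - 2 * lam) ^ 2)))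
      = ellipticK √lam * ellipticK √(1 - lam) ∧
    ellipticK √lam * ellipticK √(1 - lam)
      = ∫ k in ((1 - lam) / (1 + lam))..1,
          ellipticK k / (√(1 - k ^ 2) * √((1 + lam) ^ 2 * k ^ 2 - (1 - lam) ^ 2)) :=
  ⟨integral_mul_ellipticK_div_sqrt_mul_sqrt h0 h1,
    (integral_ellipticK_div_sqrt_mul_sqrt h0 h1).symm⟩

theorem stmt_14 (lam : ℝ) (h0 : 0 < lam) (h1 : lam ≤ 1/2) :
    (∫ k in (1-2*lam)..1,
        k * ellipticK k / (Real.sqrt (1-k^2) * Real.sqrt (k^2 - (1-2*lam)^2)))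
      = ellipticK (Real.sqrt lam) * ellipticK (Real.sqrt (1-lam)) ∧
    ellipticK (Real.sqrt lam) * ellipticK (Real.sqrt (1-lam))
      = ∫ k in ((1-lam)/(1+lam))..1,
          ellipticK k / (Real.sqrt (1-k^2) * Real.sqrt ((1+lam)^2*k^2 - (1-lam)^2)) := by
  simpa only [abs_of_nonneg (show 0 ≤ 1 - 2 * lam by linarith)] using
    stmt_14_general lam h0 (by linarith)
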